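/- arXiv:1603.04051 — 2 statements merged into one kernel-verified Lean document; each statement's English description precedes it below -/
import Mathlib

section
/- Let G be a finite group, N ⊴ G such that no irreducible complex character of N has degree divisible by the prime p, and P a Sylow p-subgroup of G. Then every element of Z(P) ∩ N is non-vanishing in G. -/
open CategoryTheory

/-!
The proof compares two evaluations of the class sum `z = ∑ y, ρ(y)`, where `y` runs over the
`G`-conjugacy class of `x`.

On a simple `G`-representation `V` with character `χ`, Schur's lemma makes `z` a scalar, and taking
traces shows that this scalar is zero if `χ(x) = 0` (`schur`). Suppose it is. Since `N` is normal,
the whole class of `x` lies in `N`, so `z` also acts on any `N`-stable subspace `U` of `V`, and acts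
there as zero. Choose `U` simple over `N`, with character `θ` (`exists_simple_subrep`). Taking the
trace on `U` gives `∑ y, θ(y) = 0`.

Every `y` is a `p`-element, so its eigenvalues are roots of unity of `p`-power order, which are
congruent to `1` modulo any maximal ideal of the algebraic integers lying over `p`. Hence
`θ(y) ≡ θ(1)` modulo such an ideal, and `0 = ∑ y, θ(y) ≡ |cl(x)| θ(1)`, that is, `p` divides
`|cl(x)| θ(1)` (`dvd_of_sum_trace_eq_zero`). But `p` does not divide `θ(1)` by hypothesis, and it
does not divide `|cl(x)|`, because the centralizer of `x` contains a Sylow `p`-subgroup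
(`not_dvd_card_conj`).
-/


theorem exists_maximal_ideal_over (p : ℕ) (hp : p.Prime) :
    ∃ I : Ideal (integralClosure ℤ ℂ), I.IsMaximal ∧
      ∀ n : ℕ, (n : integralClosure ℤ ℂ) ∈ I ↔ p ∣ n := by
  have hprime : (Ideal.span {(p : ℤ)}).IsMaximal :=
    haveI := Fact.mk hp; Int.ideal_span_isMaximal_of_prime p
  obtain ⟨I, hI, hc⟩ := Ideal.exists_ideal_over_maximal_of_isIntegral
    (S := integralClosure ℤ ℂ) (Ideal.span {(p : ℤ)}) (by
      rw [(RingHom.injective_iff_ker_eq_bot _).1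
        (FaithfulSMul.algebraMap_injective ℤ (integralClosure ℤ ℂ))]
      exact bot_le)
  refine ⟨I, hI, fun n => ?_⟩
  have : (n : ℤ) ∈ Ideal.span {(p : ℤ)} ↔ p ∣ n := by
    rw [Ideal.mem_span_singleton, Int.natCast_dvd_natCast]
  rw [← this, ← hc, Ideal.mem_comap]
  simp

/-- Modulo a prime `I` over `p`, a sum of roots of unity of `p`-power order is congruent to the
number of its terms. -/
theorem sum_roots_congr (p : ℕ) (I : Ideal (integralClosure ℤ ℂ)) [I.IsPrime] (hp : p.Prime)
    (hpI : (p : integralClosure ℤ ℂ) ∈ I) (q : ℕ) (m : Multiset ℂ) (hm : ∀ μ ∈ m, μ ^ (p ^ q) = 1) :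
    ∃ t : integralClosure ℤ ℂ, (t : ℂ) = m.sum ∧ t - (m.card : integralClosure ℤ ℂ) ∈ I := by
  induction m using Multiset.induction_on with
  | empty => exact ⟨0, by simp, by simp⟩
  | cons a m ih =>
    obtain ⟨t, ht, htI⟩ := ih fun μ h => hm μ (Multiset.mem_cons_of_mem h)
    have ha := hm a (Multiset.mem_cons_self a m)
    have hint : IsIntegral ℤ a :=
      IsIntegral.of_pow (pow_pos hp.pos q) (ha ▸ isIntegral_one)
    let a' : integralClosure ℤ ℂ := ⟨a, hint⟩
    have ha' : a' ^ (p ^ q) = 1 := Subtype.ext ha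
    have hmem : a' - 1 ∈ I := by
      have : Fact p.Prime := ⟨hp⟩
      have : CharP (integralClosure ℤ ℂ ⧸ I) p := by
        refine (CharP.charP_iff_prime_eq_zero hp).2 ?_
        rw [← map_natCast (Ideal.Quotient.mk I)]
        exact Ideal.Quotient.eq_zero_iff_mem.2 hpI
      -- In the quotient, of characteristic `p`, one has `(a - 1) ^ p ^ q = a ^ p ^ q - 1 = 0`.
      rw [← Ideal.Quotient.eq_zero_iff_mem]
      refine eq_zero_of_pow_eq_zero (n := p ^ q) ?_
      rw [map_sub, map_one, sub_pow_char_pow, one_pow, ← map_pow, ha', map_one, sub_self]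
    refine ⟨a' + t, by simp [ht, a'], ?_⟩
    have : a' + t - ((a ::ₘ m).card : integralClosure ℤ ℂ) = (a' - 1) + (t - m.card) := by
      rw [Multiset.card_cons]; push_cast; ring
    rw [this]
    exact I.add_mem hmem htI

/-- Modulo a prime `I` over `p`, the trace of an operator of `p`-power order is congruent to the
dimension of the space. -/
theorem trace_congr (p : ℕ) (I : Ideal (integralClosure ℤ ℂ)) [I.IsPrime] (hp : p.Prime)
    (hpI : (p : integralClosure ℤ ℂ) ∈ I) {W : Type*} [AddCommGroup W] [Module ℂ W]
    [FiniteDimensional ℂ W] (f : W →ₗ[ℂ] W) (q : ℕ) (hf : f ^ (p ^ q) = 1) :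
    ∃ t : integralClosure ℤ ℂ, (t : ℂ) = LinearMap.trace ℂ W f ∧
      t - (Module.finrank ℂ W : integralClosure ℤ ℂ) ∈ I := by
  have hs : f.charpoly.Splits := IsAlgClosed.splits _
  obtain ⟨t, ht, htI⟩ := sum_roots_congr p I hp hpI q f.charpoly.roots (by
    intro μ hμ
    have he : Module.End.HasEigenvalue f μ := by
      rw [Module.End.hasEigenvalue_iff_isRoot_charpoly]
      exact Polynomial.isRoot_of_mem_roots hμ
    obtain ⟨v, hv⟩ := he.exists_hasEigenvector
    have := hv.pow_apply (p ^ q)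
    rw [hf] at this
    have h2 : (μ ^ (p ^ q) - 1) • v = 0 := by
      rw [sub_smul, ← this]; simp
    exact sub_eq_zero.1 ((smul_eq_zero.1 h2).resolve_right hv.2))
  refine ⟨t, by rw [ht, Module.End.trace_eq_sum_roots_charpoly_of_splits hs], ?_⟩
  rwa [← hs.natDegree_eq_card_roots, LinearMap.charpoly_natDegree] at htI

theorem dvd_of_sum_trace_eq_zero (p : ℕ) (hp : p.Prime) {W : Type*} [AddCommGroup W] [Module ℂ W]
    [FiniteDimensional ℂ W] {ι : Type*} (s : Finset ι) (f : ι → W →ₗ[ℂ] W)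
    (hf : ∀ i ∈ s, ∃ q, f i ^ (p ^ q) = 1) (h0 : ∑ i ∈ s, LinearMap.trace ℂ W (f i) = 0) :
    p ∣ s.card * Module.finrank ℂ W := by
  obtain ⟨I, hI, hmem⟩ := exists_maximal_ideal_over p hp
  have := hI.isPrime
  choose! t ht htI using fun i hi =>
    trace_congr p I hp ((hmem p).2 dvd_rfl) (f i) (hf i hi).choose (hf i hi).choose_spec
  have hsum : ∑ i ∈ s, t i = 0 := by
    apply Subtype.ext
    push_cast
    rw [← h0]
    exact Finset.sum_congr rfl ht
  have := I.sum_mem htI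
  rw [Finset.sum_sub_distrib, hsum, zero_sub, neg_mem_iff, Finset.sum_const, nsmul_eq_mul] at this
  rw [← hmem]
  exact_mod_cast this

/-- The class of an element centralizing a Sylow `p`-subgroup has size prime to `p`: the size is the
index of the centralizer, which divides the index of the Sylow subgroup. -/
theorem not_dvd_card_conj {G : Type*} [Group G] [Fintype G] (p : ℕ) [Fact p.Prime] (P : Sylow p G)
    (x : G) (hxZ : ∀ y ∈ P.1, x * y = y * x) [DecidablePred (IsConj x)] :
    ¬ p ∣ (Finset.univ.filter (IsConj x)).card := by
  classical
  have h1 : (Finset.univ.filter (IsConj x)).card = (Subgroup.centralizer {x}).index := by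
    have : ((Finset.univ.filter (IsConj x) : Finset G) : Set G) = MulAction.orbit (ConjAct G) x := by
      ext y
      rw [ConjAct.mem_orbit_conjAct]
      simpa [isConj_iff] using isConj_comm (g := x) (h := y)
    rw [← Set.ncard_coe_finset, this, ← Nat.card_coe_set_eq,
      Nat.card_congr (MulAction.orbitEquivQuotientStabilizer (ConjAct G) x),
      ← Subgroup.index, ConjAct.stabilizer_eq_centralizer]
    rfl
  rw [h1]
  have h2 : P.1 ≤ Subgroup.centralizer {x} := by
    intro y hy
    rw [Subgroup.mem_centralizer_singleton_iff]
    exact (hxZ y hy).symm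
  exact fun h => P.not_dvd_index (h.trans (Subgroup.index_dvd_of_le h2))

/-- Endomorphisms of `V` in the category `FDRep ℂ G`, as linear endomorphisms commuting with `G`. -/
noncomputable def endEquiv {G : Type} [Group G] (V : FDRep ℂ G) :
    (V ⟶ V) ≃ₗ[ℂ] Representation.IntertwiningMap V.ρ V.ρ :=
  (FDRep.forget₂HomLinearEquiv V V).symm.trans (Rep.homLinearEquiv _ _)

/-- Schur's lemma for linear maps on the underlying space. -/
theorem schur {G : Type} [Group G] (V : FDRep ℂ G) [Simple V] (f : V →ₗ[ℂ] V)
    (hf : ∀ g, f ∘ₗ V.ρ g = V.ρ g ∘ₗ f) [Nontrivial V] : ∃ c : ℂ, f = c • LinearMap.id := by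
  have h1 := finrank_endomorphism_simple_eq_one ℂ V
  rw [(endEquiv V).finrank_eq] at h1
  let i : Representation.IntertwiningMap V.ρ V.ρ := ⟨LinearMap.id, fun g => rfl⟩
  have hi : i ≠ 0 := by
    intro h
    obtain ⟨v, hv⟩ := exists_ne (0 : V)
    exact hv congr($h v)
  obtain ⟨c, hc⟩ := (finrank_eq_one_iff_of_nonzero' i hi).1 h1 ⟨f, hf⟩
  exact ⟨c, congr(($hc).toLinearMap).symm⟩

theorem nontrivial_of_simple {G : Type} [Group G] (V : FDRep ℂ G) [Simple V] : Nontrivial V := by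
  by_contra h
  rw [not_nontrivial_iff_subsingleton] at h
  apply id_nonzero V
  apply (endEquiv V).injective
  ext v
  exact Subsingleton.elim _ _

/-- A converse of Schur's lemma, resting on complete reducibility: if only scalars commute with
`G`, the representation is simple. -/
theorem simple_of_scalar {G : Type} [Group G] [Finite G] {V : Type} [AddCommGroup V] [Module ℂ V]
    [FiniteDimensional ℂ V] [Nontrivial V] (ρ : Representation ℂ G V)
    (h : ∀ f : V →ₗ[ℂ] V, (∀ g, f ∘ₗ ρ g = ρ g ∘ₗ f) → ∃ c : ℂ, f = c • LinearMap.id) :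
    Simple (FDRep.of ρ) := by
  rw [FDRep.simple_iff_end_is_rank_one, (endEquiv (FDRep.of ρ)).finrank_eq]
  let i : Representation.IntertwiningMap ρ ρ := ⟨LinearMap.id, fun g => rfl⟩
  have hi : i ≠ 0 := by
    intro h
    obtain ⟨v, hv⟩ := exists_ne (0 : V)
    exact hv congr($h v)
  refine (finrank_eq_one_iff_of_nonzero'
    (V := Representation.IntertwiningMap ρ ρ) i hi).2 fun f => ?_
  obtain ⟨c, hc⟩ := h f.toLinearMap f.isIntertwining'
  exact ⟨c, Representation.IntertwiningMap.ext hc.symm⟩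

/-- A minimal nonzero stable subspace `U` is simple in the categorical sense: an eigenspace in `U`
of a map commuting with `G` is stable, so it is all of `U` and the map is a scalar. -/
theorem exists_simple_subrep {G : Type} [Group G] [Finite G] {V : Type} [AddCommGroup V]
    [Module ℂ V] [FiniteDimensional ℂ V] [Nontrivial V] (ρ : Representation ℂ G V) :
    ∃ U : Subrepresentation ρ, Simple (FDRep.of U.toRepresentation) := by
  let S : Set (Submodule ℂ V) := {U | U ≠ ⊥ ∧ ∀ g, ∀ v ∈ U, ρ g v ∈ U}
  obtain ⟨U, ⟨hU0, hU⟩, hmin⟩ := wellFounded_lt.has_min S ⟨⊤, top_ne_bot, by simp⟩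
  let U' : Subrepresentation ρ := ⟨U, hU⟩
  have : Nontrivial U := Submodule.nontrivial_iff_ne_bot.2 hU0
  have : Nontrivial U'.toSubmodule := this
  refine ⟨U', simple_of_scalar _ fun f hf => ?_⟩
  obtain ⟨c, hc⟩ := Module.End.exists_eigenvalue f
  refine ⟨c, ?_⟩
  have hK : (Module.End.eigenspace f c).map U.subtype ∈ S := by
    refine ⟨?_, ?_⟩
    · rw [Ne, ← Submodule.map_bot U.subtype,
        (Submodule.map_injective_of_injective U.injective_subtype).eq_iff]
      exact hc
    · rintro g _ ⟨v, hv, rfl⟩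
      refine ⟨U'.toRepresentation g v, ?_, rfl⟩
      have hv' : f v = c • v := Module.End.mem_eigenspace_iff.1 hv
      refine Module.End.mem_eigenspace_iff.2 ?_
      rw [← LinearMap.comp_apply, hf, LinearMap.comp_apply, hv', map_smul]
  have hle : (Module.End.eigenspace f c).map U.subtype ≤ U := Submodule.map_subtype_le _ _
  have heq := hle.eq_of_not_lt (hmin _ hK)
  ext1 u
  have hu : (u : V) ∈ (Module.End.eigenspace f c).map U.subtype := heq.ge u.2
  obtain ⟨w, hw, hwu⟩ := hu
  have : w = u := Subtype.ext hwu
  subst this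
  exact Module.End.mem_eigenspace_iff.1 hw

/-- if `N ⊴ G` is such that no irreducible complex character of
`N` has degree divisible by the prime `p`, and `P` is a Sylow `p`-subgroup of
`G`, then every element of `Z(P) ∩ N` is non-vanishing in `G`. -/
theorem stmt10 (G : Type) [Group G] [Fintype G] (N : Subgroup G)
    (hN : N.Normal) (p : ℕ) (hp : p.Prime) [Fact p.Prime]
    (hdeg : ∀ W : FDRep ℂ ↥N, Simple W → ¬ p ∣ Module.finrank ℂ W.V)
    (P : Sylow p G)
    (x : G) (hxN : x ∈ N) (hxP : x ∈ P.1) (hxZ : ∀ y ∈ P.1, x * y = y * x) :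
    ∀ V : FDRep ℂ G, Simple V → V.character x ≠ 0 := by
  classical
  intro V hV hx0
  have := nontrivial_of_simple V
  let s : Finset G := Finset.univ.filter (IsConj x)
  have hsN : ∀ y ∈ s, y ∈ N := by
    intro y hy
    obtain ⟨c, rfl⟩ := isConj_iff.1 (Finset.mem_filter.1 hy).2
    exact hN.conj_mem x hxN c
  let z : V →ₗ[ℂ] V := ∑ y ∈ s, V.ρ y
  have hz : ∀ g, z ∘ₗ V.ρ g = V.ρ g ∘ₗ z := by
    intro g
    change z * V.ρ g = V.ρ g * z
    rw [Finset.sum_mul, Finset.mul_sum]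
    refine Finset.sum_nbij' (fun y => g⁻¹ * y * g) (fun y => g * y * g⁻¹) ?_ ?_ ?_ ?_ ?_
    · intro y hy
      refine Finset.mem_filter.2 ⟨Finset.mem_univ _, (Finset.mem_filter.1 hy).2.trans ?_⟩
      exact isConj_iff.2 ⟨g⁻¹, by simp⟩
    · intro y hy
      refine Finset.mem_filter.2 ⟨Finset.mem_univ _, (Finset.mem_filter.1 hy).2.trans ?_⟩
      exact isConj_iff.2 ⟨g, rfl⟩
    · intro y _; group
    · intro y _; group
    · intro y _
      rw [← map_mul, ← map_mul]
      congr 1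
      group
  obtain ⟨c, hc⟩ := schur V z hz
  have htr : LinearMap.trace ℂ V z = 0 := by
    rw [map_sum]
    refine Finset.sum_eq_zero fun y hy => ?_
    obtain ⟨g, rfl⟩ := isConj_iff.1 (Finset.mem_filter.1 hy).2
    rw [← hx0, ← V.char_conj x g]
    rfl
  have hc0 : c = 0 := by
    rw [hc, map_smul, LinearMap.trace_id, smul_eq_mul, mul_eq_zero] at htr
    refine htr.resolve_right ?_
    exact_mod_cast (Module.finrank_pos (R := ℂ) (M := V)).ne'
  have hz0 : z = 0 := by rw [hc, hc0, zero_smul]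
  let σ : Representation ℂ N V := V.ρ.comp N.subtype
  obtain ⟨U, hU⟩ := exists_simple_subrep σ
  obtain ⟨k, hk⟩ := (IsPGroup.iff_orderOf.1 P.2) ⟨x, hxP⟩
  rw [Subgroup.orderOf_mk] at hk
  have key := dvd_of_sum_trace_eq_zero p hp s.attach
    (fun y => U.toRepresentation ⟨y.1, hsN y.1 y.2⟩) (by
      rintro ⟨y, hy⟩ -
      refine ⟨k, ?_⟩
      rw [← map_pow]
      convert! map_one U.toRepresentation
      obtain ⟨g, rfl⟩ := isConj_iff.1 (Finset.mem_filter.1 hy).2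
      apply Subtype.ext
      simp [conj_pow, ← hk, pow_orderOf_eq_one]) (by
      rw [← map_sum]
      refine (congrArg _ ?_).trans (map_zero (LinearMap.trace ℂ U.toSubmodule))
      ext u
      have : z (u : V) = 0 := by rw [hz0]; rfl
      rw [LinearMap.zero_apply, ZeroMemClass.coe_zero, ← this, LinearMap.sum_apply,
        LinearMap.sum_apply, AddSubmonoidClass.coe_finsetSum]
      exact Finset.sum_attach s fun y => V.ρ y (u : V))
  rw [Finset.card_attach] at key
  rcases hp.dvd_mul.1 key with h | h
  · exact not_dvd_card_conj p P x hxZ h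
  · exact hdeg _ hU h
end

section
/- Let G be a finite group, χ ∈ Irr(G), and suppose G has an irreducible character of p-defect zero for every prime p dividing |G|. Then every nontrivial element of G is vanishing, i.e., for each 1 ≠ g ∈ G there exists χ ∈ Irr(G) with χ(g) = 0. -/
open CategoryTheory

/-!
Given `g ≠ 1`, pick a prime `p` dividing its order; an irreducible character of `p`-defect zero
vanishes at `g`. The proof of this vanishing does not use Brauer's characterization of characters;
it works with an integral form over a valuation ring.

Let `A` be a valuation subring of `ℂ` with `p` in its maximal ideal `𝔪`. Finitely generated
torsion-free `A`-modules are free, so a representation `V` of `G` can be written by matrices `R g`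
over `A` (`exists_integral_form`). If `V` is irreducible of dimension `n`, Schur's lemma gives
`∑ g, R g * ψ * R g⁻¹ = (|G| / n) * tr ψ`, and `p`-defect zero says exactly that `n / |G|` lies in
`A`; hence some `ψ` over `A` has relative trace `1`. Grouping the sum by cosets of `⟨x⟩` gives `θ`
over `A` with `∑ k < N, X ^ k * θ * X ^ (-k) = 1`, where `X = R x` and `N` is the order of `x`
(in other words, the lattice is relatively projective over `⟨x⟩`).

For an `N`-th root of unity `z` put `S z = ∑ k < N, z ^ k • X ^ k`. Then `S z * θ` is idempotent,
with trace `∑ k < N, z ^ k * tr (X ^ k * θ)`. If `p ∣ N` and `ε` is a primitive `p`-th root of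
unity, then `ε ≡ 1` modulo `𝔪`, so the idempotents for `z` and `z * ε` agree modulo `𝔪` and have
the same trace. Thus the polynomial `∑ k < N, (1 - ε ^ k) * tr (X ^ k * θ) * z ^ k` of degree less
than `N` has `N` roots and vanishes; its coefficient at `k = 1` gives `tr (X * θ) = 0`, while
`tr X = N * tr (X * θ)`.
-/

/-- Idempotent matrices over a local ring that agree modulo the maximal ideal are conjugate, by
`E * F + (1 - E) * (1 - F)`, and so have the same trace. -/
theorem trace_eq_of_idem {A n : Type*} [CommRing A] [IsLocalRing A] [Fintype n] [DecidableEq n]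
    {E F : Matrix n n A} (hE : E * E = E) (hF : F * F = F)
    (h : E.map (IsLocalRing.residue A) = F.map (IsLocalRing.residue A)) :
    E.trace = F.trace := by
  set U : Matrix n n A := E * F + (1 - E) * (1 - F) with hU
  have hUmap : U.map (IsLocalRing.residue A) = 1 := by
    have hF' := congrArg (IsLocalRing.residue A).mapMatrix hF
    rw [map_mul] at hF'
    change (IsLocalRing.residue A).mapMatrix U = 1
    have h' : (IsLocalRing.residue A).mapMatrix E = (IsLocalRing.residue A).mapMatrix F := h
    simp only [hU, map_add, map_mul, map_sub, map_one, h']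
    noncomm_ring [hF']
  have hdet : IsUnit U.det := by
    apply isUnit_of_map_unit (IsLocalRing.residue A)
    have := (IsLocalRing.residue A).map_det U
    rw [this]
    change IsUnit (U.map (IsLocalRing.residue A)).det
    rw [hUmap]; simp
  have hc : U * F = E * U := by
    have h1 : U * F = E * (F * F) + (1 - E) * (F - F * F) := by rw [hU]; noncomm_ring
    have h2 : E * U = E * E * F + (E - E * E) * (1 - F) := by rw [hU]; noncomm_ring
    rw [h1, h2, hE, hF, sub_self, sub_self, mul_zero, zero_mul]
  have hE' : E = U * F * U⁻¹ := by
    rw [hc, mul_assoc, Matrix.mul_nonsing_inv _ hdet, mul_one]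
  rw [hE', Matrix.trace_mul_comm, ← mul_assoc, Matrix.nonsing_inv_mul _ hdet, one_mul]

/-- Let `X` be a matrix with `X ^ N = 1` over a local domain that contains a primitive `N`-th root of
unity and whose residue characteristic `p` divides `N`. If the identity is a relative trace
`∑ k < N, X ^ k * θ * X ^ (-k)`, then `tr X = 0`. Here
`Y` plays the part of `X⁻¹`. -/
theorem trace_eq_zero_of_relative_trace {A n : Type*} [CommRing A] [IsDomain A] [IsLocalRing A]
    [Fintype n] [DecidableEq n] {p N : ℕ} (hp : p.Prime) (hpN : p ∣ N) (hN : 0 < N)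
    (hpA : (p : A) ∈ IsLocalRing.maximalIdeal A) {ω : A} (hω : IsPrimitiveRoot ω N)
    {X Y θ : Matrix n n A} (hXY : X * Y = 1) (hX : X ^ N = 1)
    (hθ : ∑ k ∈ Finset.range N, X ^ k * θ * Y ^ k = 1) : X.trace = 0 := by
  have hYX : Y * X = 1 := mul_eq_one_comm.mp hXY
  have hcomm : Commute X Y := hXY.trans hYX.symm
  have hYXk (k : ℕ) : Y ^ k * X ^ k = 1 := by rw [← hcomm.symm.mul_pow, hYX, one_pow]
  have htr : X.trace = N * (X * θ).trace := by
    calc X.trace = (X * ∑ k ∈ Finset.range N, X ^ k * θ * Y ^ k).trace := by rw [hθ, mul_one]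
      _ = ∑ k ∈ Finset.range N, (X * θ).trace := by
        rw [Finset.mul_sum, Matrix.trace_sum]
        refine Finset.sum_congr rfl fun k _ => ?_
        rw [← mul_assoc, Matrix.trace_mul_comm, ← mul_assoc, ← mul_assoc,
          ((hcomm.symm.pow_left k).eq : Y ^ k * X = X * Y ^ k), mul_assoc X, hYXk, mul_one]
      _ = _ := by simp
  let S : A → Matrix n n A := fun z => ∑ k ∈ Finset.range N, z ^ k • X ^ k
  -- The columns of `S z` are eigenvectors of `Y` for `z`: multiplication by `z • X` permutes
  -- the terms of `S z` cyclically.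
  have hYS (z : A) (hz : z ^ N = 1) : Y * S z = z • S z := by
    have h1 : S z = z • (X * S z) := by
      have := Finset.sum_range_succ' (fun k => z ^ k • X ^ k) N
      rw [Finset.sum_range_succ, hz, hX] at this
      simp only [pow_zero, add_left_inj] at this
      change S z = _ at this
      refine this.trans ?_
      rw [Finset.mul_sum, Finset.smul_sum]
      refine Finset.sum_congr rfl fun k _ => ?_
      rw [pow_succ' z k, pow_succ' X k, mul_smul_comm, smul_smul]
    conv_lhs => rw [h1]
    rw [mul_smul_comm, ← mul_assoc, hYX, one_mul]
  have hYkS (z : A) (hz : z ^ N = 1) (k : ℕ) : Y ^ k * S z = z ^ k • S z := by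
    induction k with
    | zero => simp
    | succ k ih => rw [pow_succ, mul_assoc, hYS z hz, mul_smul_comm, ih, smul_smul, pow_succ']
  have hSθS (z : A) (hz : z ^ N = 1) : S z * θ * S z = S z := by
    calc S z * θ * S z = ∑ k ∈ Finset.range N, X ^ k * θ * (Y ^ k * S z) := by
          conv_lhs => enter [1, 1]; simp only [S]
          rw [Finset.sum_mul, Finset.sum_mul]
          refine Finset.sum_congr rfl fun k _ => ?_
          rw [hYkS z hz]; simp
      _ = (∑ k ∈ Finset.range N, X ^ k * θ * Y ^ k) * S z := by
          rw [Finset.sum_mul]; simp only [mul_assoc]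
      _ = S z := by rw [hθ, one_mul]
  have hidem (z : A) (hz : z ^ N = 1) : (S z * θ) * (S z * θ) = S z * θ := by
    rw [← mul_assoc, hSθS z hz]
  obtain ⟨M, rfl⟩ := hpN
  have hM : 0 < M := Nat.pos_of_mul_pos_left hN
  set ε := ω ^ M with hε
  have hεprim : IsPrimitiveRoot ε p := hω.pow hN (mul_comm p M)
  have hε1 : ε ≠ 1 := hεprim.ne_one hp.one_lt
  -- In residue characteristic `p`, `(ε - 1) ^ p = ε ^ p - 1 = 0`.
  have hεres : IsLocalRing.residue A ε = 1 := by
    have hp0 : ((p : ℕ) : IsLocalRing.ResidueField A) = 0 := by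
      rw [← map_natCast (IsLocalRing.residue A)]
      exact (IsLocalRing.residue_eq_zero_iff _).mpr hpA
    have := Fact.mk hp
    have : CharP (IsLocalRing.ResidueField A) p := (CharP.charP_iff_prime_eq_zero hp).2 hp0
    have h1 : (IsLocalRing.residue A ε - 1) ^ p = 0 := by
      rw [sub_pow_char, ← map_pow, hεprim.pow_eq_one]; simp
    exact sub_eq_zero.mp (pow_eq_zero_iff hp.ne_zero |>.mp h1)
  have hkey (z : A) (hz : z ^ (p * M) = 1) :
      ∑ k ∈ Finset.range (p * M), (1 - ε ^ k) * (X ^ k * θ).trace * z ^ k = 0 := by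
    have hz' : (z * ε) ^ (p * M) = 1 := by
      rw [mul_pow, hz, pow_mul ε, hεprim.pow_eq_one, one_pow, one_mul]
    have := trace_eq_of_idem (hidem z hz) (hidem (z * ε) hz') (by
      change (IsLocalRing.residue A).mapMatrix _ = (IsLocalRing.residue A).mapMatrix _
      rw [map_mul, map_mul]
      congr 1
      simp only [S, map_sum]
      refine Finset.sum_congr rfl fun k _ => ?_
      ext i j
      simp [hεres])
    simp only [S, Finset.sum_mul, Matrix.trace_sum, smul_mul_assoc, Matrix.trace_smul,
      smul_eq_mul] at this
    rw [← sub_eq_zero, ← Finset.sum_sub_distrib] at this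
    rw [← this]
    refine Finset.sum_congr rfl fun k _ => ?_
    ring
  have h1lt : 1 < p * M := lt_of_lt_of_le hp.one_lt (Nat.le_mul_of_pos_right p hM)
  let Q : Polynomial A := ∑ k ∈ Finset.range (p * M),
    Polynomial.C ((1 - ε ^ k) * (X ^ k * θ).trace) * Polynomial.X ^ k
  have hQ : Q = 0 := by
    refine Polynomial.eq_zero_of_degree_lt_of_eval_finset_eq_zero
      (Polynomial.nthRootsFinset (p * M) (1 : A)) ?_ ?_
    · rw [hω.card_nthRootsFinset]
      refine (Polynomial.degree_sum_le _ _).trans_lt ?_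
      rw [Finset.sup_lt_iff (by exact WithBot.bot_lt_coe _)]
      intro k hk
      exact (Polynomial.degree_C_mul_X_pow_le _ _).trans_lt
        (by exact_mod_cast Finset.mem_range.mp hk)
    · intro z hz
      rw [Polynomial.mem_nthRootsFinset hN] at hz
      simpa [Q, Polynomial.eval_finsetSum] using hkey z hz
  have hcoeff := congrArg (fun q => Polynomial.coeff q 1) hQ
  simp only [Q, Polynomial.finsetSum_coeff, Polynomial.coeff_C_mul_X_pow] at hcoeff
  rw [Finset.sum_ite_eq, if_pos (Finset.mem_range.mpr h1lt), Polynomial.coeff_zero, pow_one,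
    pow_one] at hcoeff
  rcases mul_eq_zero.mp hcoeff with h | h
  · exact absurd (sub_eq_zero.mp h).symm hε1
  · rw [htr, h, mul_zero]

/-- If the identity is a relative trace from the trivial subgroup to `G`, then it is one from the
trivial subgroup to `⟨x⟩`: sum over coset representatives. -/
theorem exists_cyclic_relative_trace {A n G : Type*} [CommRing A] [Fintype n] [DecidableEq n]
    [Group G] [Fintype G] (R : G →* Matrix n n A) {ψ : Matrix n n A}
    (hψ : ∑ g : G, R g * ψ * R g⁻¹ = 1) (x : G) :
    ∃ θ : Matrix n n A,
      ∑ k ∈ Finset.range (orderOf x), R x ^ k * θ * R x⁻¹ ^ k = 1 := by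
  classical
  let H := Subgroup.zpowers x
  refine ⟨∑ q : G ⧸ H, R q.out⁻¹ * ψ * R q.out, ?_⟩
  -- `G` is the disjoint union of the left cosets `q.out * H`. The sum is taken over inverses below,
  -- so that the factor from `H` conjugates on the outside.
  let e : (G ⧸ H) × H → G := fun y => y.1.out * y.2
  have he : Function.Bijective e := by
    refine ⟨fun y z hyz => ?_, fun g => ?_⟩
    · have h1 : y.1 = z.1 := by
        have := congrArg (QuotientGroup.mk (s := H)) hyz
        simpa [e] using this
      refine Prod.ext h1 (Subtype.ext ?_)
      simpa [e, h1] using hyz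
    · exact ⟨(g, ⟨(QuotientGroup.mk (s := H) g).out⁻¹ * g,
        QuotientGroup.eq.mp (QuotientGroup.out_eq' _)⟩), by simp [e]⟩
  rw [← hψ, ← Equiv.sum_comp (Equiv.inv G), ← Equiv.sum_comp (Equiv.ofBijective e he),
    Fintype.sum_prod_type_right, ← Equiv.sum_comp (Equiv.inv H),
    ← Equiv.sum_comp (finEquivZPowers (isOfFinOrder_of_finite x)), Finset.sum_range]
  refine Finset.sum_congr rfl fun k _ => ?_
  rw [Finset.mul_sum, Finset.sum_mul]
  refine Finset.sum_congr rfl fun q _ => ?_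
  have : Equiv.ofBijective e he
      (q, Equiv.inv H (finEquivZPowers (isOfFinOrder_of_finite x) k))
      = q.out * (x ^ (k : ℕ))⁻¹ := rfl
  rw [this]
  simp only [Equiv.inv_apply, mul_inv_rev, inv_inv, map_mul, map_pow, mul_assoc, ← inv_pow]

/-- Some valuation subring of `ℂ` dominates the localization of `ℤ` at `p`. -/
theorem exists_valuationSubring (p : ℕ) (hp : p.Prime) :
    ∃ A : ValuationSubring ℂ, (p : A) ∈ IsLocalRing.maximalIdeal A := by
  let Z : Subring ℂ := (Int.castRingHom ℂ).range
  have hI : Ideal.span {(p : Z)} ≠ ⊤ := by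
    rw [Ne, Ideal.span_singleton_eq_top]
    intro h
    obtain ⟨⟨b, c, hc⟩, hb⟩ := h.exists_right_inv
    have hb' := congrArg (Subtype.val) hb
    simp only [Subring.coe_mul, Subring.coe_one] at hb'
    have : (p : ℤ) * c = 1 := by
      rw [← hc] at hb'
      have : ((p : ℤ) : ℂ) * (c : ℂ) = 1 := by simpa using hb'
      exact_mod_cast this
    have h2 := Int.isUnit_iff_natAbs_eq.mp (IsUnit.of_mul_eq_one c this)
    exact hp.one_lt.ne' (by simpa using h2)
  obtain ⟨A, -, hA⟩ := Ideal.image_subset_nonunits_valuationSubring _ hI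
  refine ⟨A, ?_⟩
  have := hA ⟨(p : Z), Ideal.mem_span_singleton_self _, rfl⟩
  rw [← A.image_maximalIdeal] at this
  obtain ⟨a, ha, hap⟩ := this
  have : a = (p : A) := Subtype.ext (by simpa using hap)
  rwa [← this]

theorem mem_of_pow_eq_one {K : Type*} [Field K] (A : ValuationSubring K) {z : K} {N : ℕ}
    (hN : N ≠ 0) (hz : z ^ N = 1) : z ∈ A := by
  rw [← A.valuation_le_one_iff]
  have := congrArg A.valuation hz
  rw [map_pow, map_one, pow_eq_one_iff_of_nonneg zero_le hN] at this
  exact this.le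

/-- A representation of a finite group over `K` has a matrix form over any valuation subring `A` of
`K`: the `A`-span of the translates of a basis is a stable lattice, and it is free over `A`. -/
theorem exists_integral_form {K G V : Type*} [Field K] [Group G] [Finite G] [AddCommGroup V]
    [Module K V] [FiniteDimensional K V] (A : ValuationSubring K) (ρ : Representation K G V) :
    ∃ (b : Module.Basis (Fin (Module.finrank K V)) K V)
      (R : G →* Matrix (Fin (Module.finrank K V)) (Fin (Module.finrank K V)) A),
      ∀ g, (R g).map A.subtype = LinearMap.toMatrix b b (ρ g) := by
  let e := Module.finBasis K V
  let s : Set V := Set.range fun x : G × Fin (Module.finrank K V) => ρ x.1 (e x.2)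
  let M : Submodule A V := Submodule.span A s
  have hlat : Submodule.IsLattice K M := by
    refine ⟨Submodule.fg_span (Set.finite_range _), ?_⟩
    rw [eq_top_iff, ← e.span_eq]
    refine Submodule.span_mono ?_
    rintro _ ⟨i, rfl⟩
    exact Submodule.subset_span ⟨(1, i), by simp⟩
  have hstab (g : G) : ∀ m ∈ M, ((ρ g).restrictScalars A) m ∈ M := by
    intro m hm
    induction hm using Submodule.span_induction with
    | mem v hv =>
      obtain ⟨⟨h, i⟩, rfl⟩ := hv
      exact Submodule.subset_span ⟨(g * h, i), by simp⟩
    | zero => simp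
    | add v w _ _ hv hw => rw [map_add]; exact M.add_mem hv hw
    | smul a v _ hv => rw [map_smul]; exact M.smul_mem a hv
  have : Module.IsTorsionFree A V := Module.IsTorsionFree.trans_faithfulSMul A K V
  have : Module.Flat A M := Module.Flat.flat_iff_torsion_eq_bot_of_isBezout.mpr
    (Submodule.isTorsionFree_iff_torsion_eq_bot.mp inferInstance)
  have : Module.Free A M := Module.free_of_flat_of_isLocalRing
  have hrank : Module.finrank A M = Module.finrank K V :=
    ((Module.finrank_eq_card_basis ((Module.finBasis A M).extendOfIsLattice K)).trans
      (Fintype.card_fin _)).symm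
  let b : Module.Basis (Fin (Module.finrank K V)) A M :=
    (Module.finBasis A M).reindex (finCongr hrank)
  let R₀ : G →* (M →ₗ[A] M) :=
    { toFun := fun g => ((ρ g).restrictScalars A).restrict (hstab g)
      map_one' := by ext; simp
      map_mul' := fun g h => by ext; simp }
  refine ⟨b.extendOfIsLattice K, (LinearMap.toMatrixAlgEquiv b).toMonoidHom.comp R₀,
    fun g => ?_⟩
  ext i j
  have hrepr (m : M) : ((b.repr m i : A) : K) = (b.extendOfIsLattice K).repr (m : V) i := by
    have hm : (m : V) = ∑ k, ((b.repr m k : A) : K) • b.extendOfIsLattice K k := by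
      conv_lhs => rw [← b.sum_repr m, Submodule.coe_sum]
      refine Finset.sum_congr rfl fun k _ => ?_
      rw [Module.Basis.extendOfIsLattice_apply]; rfl
    rw [hm, Module.Basis.repr_sum_self]
  rw [LinearMap.toMatrix_apply, Module.Basis.extendOfIsLattice_apply]
  refine Eq.trans ?_ (hrepr (R₀ g (b j)))
  exact congrArg Subtype.val (LinearMap.toMatrixAlgEquiv_apply b (R₀ g) i j)

/-- Schur's lemma applied to the sum of the conjugates of an arbitrary endomorphism. -/
theorem schur_sum {G : Type} [Group G] [Fintype G] (V : FDRep ℂ G) [Simple V]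
    (φ : V.V →ₗ[ℂ] V.V) :
    ∃ c : ℂ, ∑ g : G, V.ρ g * φ * V.ρ g⁻¹ = c • (1 : V.V →ₗ[ℂ] V.V) := by
  let T : V.V →ₗ[ℂ] V.V := ∑ g : G, V.ρ g * φ * V.ρ g⁻¹
  have hT (h : G) : T * V.ρ h = V.ρ h * T := by
    simp only [T, Finset.sum_mul, Finset.mul_sum]
    rw [← Equiv.sum_comp (Equiv.mulLeft h)]
    refine Finset.sum_congr rfl fun g _ => ?_
    simp only [Equiv.coe_mulLeft, map_mul, mul_inv_rev, mul_assoc]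
    rw [← map_mul V.ρ h⁻¹ h]; simp
  let f : V ⟶ V := ⟨InducedCategory.homMk (ModuleCat.ofHom T), fun g => by
    ext v
    exact LinearMap.congr_fun (hT g) v⟩
  obtain ⟨c, hc⟩ := endomorphism_simple_eq_smul_id ℂ f
  refine ⟨c, ?_⟩
  have := congrArg (fun a : V ⟶ V => a.hom.hom.hom) hc
  exact this.symm

/-- If `m` and `n` have the same `p`-part, then `n / m` lies in any valuation ring with `p` in its
maximal ideal. -/
theorem exists_degree_div_card {A : ValuationSubring ℂ} {p n m : ℕ} (hp : p.Prime)
    (hpA : (p : A) ∈ IsLocalRing.maximalIdeal A) (hm : m ≠ 0)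
    (h : m.factorization p = n.factorization p) :
    ∃ u : A, u * (m : A) = n := by
  have hcop : ¬ p ∣ m / p ^ m.factorization p := Nat.not_dvd_ordCompl hp hm
  have hunit : IsUnit ((m / p ^ m.factorization p : ℕ) : A) := by
    by_contra hnu
    have hmem := (IsLocalRing.mem_maximalIdeal _).mpr hnu
    obtain ⟨a, b, hab⟩ := (Nat.isCoprime_iff_coprime.mpr
      ((Nat.Prime.coprime_iff_not_dvd hp).mpr hcop))
    have hab' := congrArg (Int.cast : ℤ → A) hab
    push_cast at hab'
    refine (Ideal.ne_top_iff_one _).mp (IsLocalRing.maximalIdeal.isMaximal A).ne_top ?_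
    rw [← hab']
    exact Ideal.add_mem _ (Ideal.mul_mem_left _ _ hpA) (Ideal.mul_mem_left _ _ hmem)
  obtain ⟨v, hv⟩ := hunit.exists_left_inv
  refine ⟨(n / p ^ n.factorization p : ℕ) * v, ?_⟩
  have h1 : (m : A) = (p ^ m.factorization p : ℕ) * (m / p ^ m.factorization p : ℕ) := by
    rw [← Nat.cast_mul, Nat.ordProj_mul_ordCompl_eq_self]
  have h2 : (n : A) = (p ^ n.factorization p : ℕ) * (n / p ^ n.factorization p : ℕ) := by
    rw [← Nat.cast_mul, Nat.ordProj_mul_ordCompl_eq_self]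
  rw [h2, h1, ← h]
  linear_combination (n / p ^ m.factorization p : ℕ) * (p ^ m.factorization p : ℕ) * hv

/-- An irreducible character of `p`-defect zero vanishes on the elements of order divisible by `p`. -/
theorem character_eq_zero_of_defect_zero {G : Type} [Group G] [Fintype G] {p : ℕ} (hp : p.Prime)
    (V : FDRep ℂ G) [Simple V]
    (hdef : (Nat.card G).factorization p = (Module.finrank ℂ V.V).factorization p)
    {x : G} (hx : p ∣ orderOf x) : V.character x = 0 := by
  classical
  have hcard : Nat.card G ≠ 0 := Nat.card_pos.ne'
  have hdim : Module.finrank ℂ V.V ≠ 0 := by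
    intro h0
    rw [h0, Nat.factorization_zero, Finsupp.zero_apply] at hdef
    exact (hp.factorization_pos_of_dvd hcard (hx.trans (orderOf_dvd_natCard x))).ne' hdef
  obtain ⟨A, hpA⟩ := exists_valuationSubring p hp
  obtain ⟨b, R, hR⟩ := exists_integral_form A V.ρ
  obtain ⟨u, hu⟩ := exists_degree_div_card hp hpA hcard hdef
  have hinj : Function.Injective (A.subtype.mapMatrix (m := Fin (Module.finrank ℂ V.V))) :=
    Matrix.map_injective Subtype.val_injective
  let i₀ : Fin (Module.finrank ℂ V.V) := ⟨0, Nat.pos_of_ne_zero hdim⟩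
  -- A matrix of trace `u = n / |G|` has relative trace `1`; the scalar is found by taking traces.
  have hψ : ∑ g : G, R g * Matrix.single i₀ i₀ u * R g⁻¹ = 1 := by
    obtain ⟨c, hc⟩ := schur_sum V (Matrix.toLin b b (Matrix.single i₀ i₀ (u : ℂ)))
    have hc' := congrArg (LinearMap.toMatrix b b) hc
    simp only [map_sum, LinearMap.toMatrix_mul, LinearMap.toMatrix_toLin, map_smul,
      LinearMap.toMatrix_one, ← hR] at hc'
    have htr := congrArg Matrix.trace hc'
    have hterm (g : G) : ((R g).map A.subtype * Matrix.single i₀ i₀ (u : ℂ) *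
        (R g⁻¹).map A.subtype).trace = (u : ℂ) := by
      rw [Matrix.trace_mul_comm, ← mul_assoc]
      have : (R g⁻¹).map A.subtype * (R g).map A.subtype = 1 := by
        change A.subtype.mapMatrix _ * A.subtype.mapMatrix _ = 1
        rw [← map_mul, ← map_mul]; simp
      rw [this, one_mul, Matrix.trace_single_eq_same]
    rw [Matrix.trace_sum, Finset.sum_congr rfl fun g _ => hterm g, Matrix.trace_smul,
      Matrix.trace_one] at htr
    have hu' := congrArg A.subtype hu
    have hc1 : c = 1 := by
      have hdimC : (Module.finrank ℂ V.V : ℂ) ≠ 0 := by exact_mod_cast hdim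
      simp at htr hu'
      apply mul_right_cancel₀ hdimC
      rw [← htr, one_mul, ← hu', mul_comm]
    apply hinj
    rw [map_sum, map_one]
    rw [hc1, one_smul] at hc'
    rw [← hc']
    refine Finset.sum_congr rfl fun g _ => ?_
    rw [map_mul, map_mul]
    congr 1
    refine congrArg _ ?_
    exact Matrix.map_single i₀ i₀ u A.subtype
  obtain ⟨θ, hθ⟩ := exists_cyclic_relative_trace R hψ x
  have hN : orderOf x ≠ 0 := (orderOf_pos x).ne'
  have hprim := Complex.isPrimitiveRoot_exp (orderOf x) hN
  have hω : IsPrimitiveRoot (⟨_, mem_of_pow_eq_one A hN hprim.pow_eq_one⟩ : A) (orderOf x) :=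
    IsPrimitiveRoot.of_map_of_injective (f := A.subtype) hprim Subtype.val_injective
  have htr := trace_eq_zero_of_relative_trace hp hx (orderOf_pos x) hpA hω
    (X := R x) (Y := R x⁻¹) (by rw [← map_mul]; simp)
    (by rw [← map_pow, pow_orderOf_eq_one, map_one]) hθ
  change LinearMap.trace ℂ _ (V.ρ x) = 0
  rw [LinearMap.trace_eq_matrix_trace ℂ b, ← hR]
  exact (AddMonoidHom.map_trace A.subtype.toAddMonoidHom (R x)).symm.trans
    ((congrArg A.subtype htr).trans (map_zero _))

/-- if a finite group `G` has an irreducible character of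
`p`-defect zero for every prime `p` dividing `|G|`, then every nontrivial
element of `G` is vanishing: it is a zero of some irreducible character. -/
theorem stmt12 (G : Type) [Group G] [Fintype G]
    (hdef : ∀ p : ℕ, p.Prime → p ∣ Nat.card G →
      ∃ V : FDRep ℂ G, Simple V ∧
        (Nat.card G).factorization p = (Module.finrank ℂ V.V).factorization p) :
    ∀ g : G, g ≠ 1 → ∃ V : FDRep ℂ G, Simple V ∧ V.character g = 0 := by
  intro g hg
  obtain ⟨p, hp, hpg⟩ := Nat.exists_prime_and_dvd (mt orderOf_eq_one_iff.mp hg)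
  obtain ⟨V, hV, h⟩ := hdef p hp (hpg.trans (orderOf_dvd_natCard g))
  exact ⟨V, hV, character_eq_zero_of_defect_zero hp V h hpg⟩
end
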